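/- Let S be a set of 4-permutations. Then there exists a permuton μ that is not the uniform permuton and satisfies Σ_{π∈S} d(π,μ) = |S|/24, unless S is one of the following five sets: {1234,1243,2134,2143,3412,3421,4312,4321}, {1234,1432,2143,2341,3214,3412,4123,4321}, {1324,1342,2413,2431,3124,3142,4213,4231}, {1324,1423,2314,2413,3142,3241,4132,4231}, {1234,1243,1432,2134,2143,2341,3214,3412,3421,4123,4312,4321}, or the complement of one of these five sets within the set of all 24 4-permutations. -/

import Mathlib

open MeasureTheory Filter

noncomputable section

/-- A permuton: a Borel probability measure on `ℝ × ℝ` (supported on `[0,1]²`)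
with uniform marginals. -/
def IsPermuton (μ : Measure (ℝ × ℝ)) : Prop :=
  IsProbabilityMeasure μ ∧
    (∀ x x' : ℝ, 0 ≤ x → x ≤ x' → x' ≤ 1 →
      μ (Set.Icc x x' ×ˢ Set.Icc (0 : ℝ) 1) = ENNReal.ofReal (x' - x)) ∧
    (∀ y y' : ℝ, 0 ≤ y → y ≤ y' → y' ≤ 1 →
      μ (Set.Icc (0 : ℝ) 1 ×ˢ Set.Icc y y') = ENNReal.ofReal (y' - y))

/-- The uniform permuton: two-dimensional Lebesgue measure on `[0,1]²`. -/
def uniformPermuton : Measure (ℝ × ℝ) :=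
  volume.restrict (Set.Icc (0 : ℝ) 1 ×ˢ Set.Icc (0 : ℝ) 1)

/-- The support of a Borel measure: all points each of whose open neighbourhoods has
positive measure. -/
def measSupport (μ : Measure (ℝ × ℝ)) : Set (ℝ × ℝ) :=
  {p | ∀ U : Set (ℝ × ℝ), IsOpen U → p ∈ U → 0 < μ U}

/-- The pattern density of a `k`-permutation `π` in a measure `μ` on `ℝ × ℝ`:
the `μ^{⊗ k}`-probability that `k` sampled points, relabelled so that their
`x`-coordinates increase, have `y`-coordinates ordered according to `π`. -/
def PermutonDensity {k : ℕ} (π : Equiv.Perm (Fin k)) (μ : Measure (ℝ × ℝ)) : ℝ :=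
  ((Measure.pi fun _ : Fin k => μ)
    {p : Fin k → ℝ × ℝ | ∃ σ : Equiv.Perm (Fin k),
      StrictMono (fun i => (p (σ i)).1) ∧
        ∀ i j : Fin k, (p (σ i)).2 < (p (σ j)).2 ↔ π i < π j}).toReal

open scoped Classical in
/-- The pattern density of a `k`-permutation `π` in an `n`-permutation `Π`:
the proportion of `k`-element subsets of `Fin n` on which `Π` induces the pattern `π`
(zero when `n < k`). -/
def PatternDensity {k n : ℕ} (π : Equiv.Perm (Fin k)) (Perm : Equiv.Perm (Fin n)) : ℝ :=
  ((Finset.univ.filter fun A : Finset (Fin n) =>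
      ∃ h : A.card = k, ∀ i j : Fin k,
        Perm ↑(A.orderIsoOfFin h i) < Perm ↑(A.orderIsoOfFin h j) ↔ π i < π j).card : ℝ) /
    (n.choose k)

/-- A sequence of permutations (of varying orders) is quasirandom if the density of every
pattern `π` converges to `1/|π|!`. -/
def Quasirandom (P : ℕ → (n : ℕ) × Equiv.Perm (Fin n)) : Prop :=
  ∀ (k : ℕ) (π : Equiv.Perm (Fin k)),
    Tendsto (fun i => PatternDensity π (P i).2) atTop (nhds (1 / (Nat.factorial k : ℝ)))

/-- A set `S` of `k`-permutations is `Σ`-forcing if a sequence of permutations is quasirandom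
exactly when the sum of the densities of the patterns from `S` converges to `|S|/k!`. -/
def SigmaForcing {k : ℕ} (S : Finset (Equiv.Perm (Fin k))) : Prop :=
  ∀ P : ℕ → (n : ℕ) × Equiv.Perm (Fin n),
    Quasirandom P ↔
      Tendsto (fun i => ∑ π ∈ S, PatternDensity π (P i).2) atTop
        (nhds ((S.card : ℝ) / (Nat.factorial k : ℝ)))

/-- The `4`-permutation written in one-line notation as `(a+1)(b+1)(c+1)(d+1)`
(inputs are 0-indexed). -/
def mk4 (a b c d : Fin 4) (h : Function.Bijective ![a, b, c, d] := by decide) :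
    Equiv.Perm (Fin 4) :=
  Equiv.ofBijective _ h

/-- A doubly stochastic matrix: non-negative entries, all row and column sums equal to one. -/
def IsDoublyStochastic {n : ℕ} (A : Matrix (Fin n) (Fin n) ℝ) : Prop :=
  (∀ i j, 0 ≤ A i j) ∧ (∀ i, ∑ j, A i j = 1) ∧ (∀ j, ∑ i, A i j = 1)

/-- The step permuton `μ[A]` associated with an `n × n` doubly stochastic matrix `A`. -/
def stepPermuton {n : ℕ} (A : Matrix (Fin n) (Fin n) ℝ) : Measure (ℝ × ℝ) :=
  ∑ i : Fin n, ∑ j : Fin n,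
    ENNReal.ofReal (A i j * n) •
      volume.restrict
        (Set.Ico ((i : ℝ) / n) (((i : ℝ) + 1) / n) ×ˢ
          Set.Ico ((j : ℝ) / n) (((j : ℝ) + 1) / n))

/-- The matrix `B^{ij}` (0-indexed: `p, q ∈ [n-1]`): `+1` at positions `(p,q)` and
`(p+1,q+1)`, `-1` at positions `(p,q+1)` and `(p+1,q)`, `0` elsewhere. -/
def Bmat (n : ℕ) (p q : Fin (n - 1)) : Matrix (Fin n) (Fin n) ℝ := fun a b =>
  (if (a : ℕ) = (p : ℕ) ∧ (b : ℕ) = (q : ℕ) then 1 else 0) +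
    (if (a : ℕ) = (p : ℕ) + 1 ∧ (b : ℕ) = (q : ℕ) + 1 then 1 else 0) -
    (if (a : ℕ) = (p : ℕ) ∧ (b : ℕ) = (q : ℕ) + 1 then 1 else 0) -
    (if (a : ℕ) = (p : ℕ) + 1 ∧ (b : ℕ) = (q : ℕ) then 1 else 0)

/-- The matrix `A + ∑_{i,j} x_{ij} B^{ij}` where `A` is the `n × n` matrix with all
entries `1/n`. -/
def pertMatrix (n : ℕ) (x : Fin (n - 1) × Fin (n - 1) → ℝ) : Matrix (Fin n) (Fin n) ℝ :=
  fun a b => 1 / n + ∑ p : Fin (n - 1) × Fin (n - 1), x p * Bmat n p.1 p.2 a b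

/-- The function `h_{S,n}`: the sum over `π ∈ S` of the pattern density of `π` in the
step permuton of the perturbed matrix. -/
def hSN (n : ℕ) (S : Finset (Equiv.Perm (Fin 4))) (x : Fin (n - 1) × Fin (n - 1) → ℝ) : ℝ :=
  ∑ π ∈ S, PermutonDensity π (stepPermuton (pertMatrix n x))

open scoped Classical in
/-- The cover matrix of a set `S` of `4`-permutations: `C i j` is the number of `π ∈ S`
with `π j = i`. -/
def coverMatrix (S : Finset (Equiv.Perm (Fin 4))) : Fin 4 → Fin 4 → ℕ := fun i j =>
  (S.filter fun π => π j = i).card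

/-- The eight symmetry operations on `4`-permutations. -/
def symOps : List (Equiv.Perm (Fin 4) → Equiv.Perm (Fin 4)) :=
  [fun σ => σ,
   fun σ => σ * Fin.revPerm,
   fun σ => Fin.revPerm * σ,
   fun σ => Fin.revPerm * σ * Fin.revPerm,
   fun σ => σ⁻¹,
   fun σ => σ⁻¹ * Fin.revPerm,
   fun σ => Fin.revPerm * σ⁻¹,
   fun σ => Fin.revPerm * σ⁻¹ * Fin.revPerm]

open scoped Classical in
/-- `T` is symmetric to `S` if one of the eight symmetry operations maps `S` onto `T`. -/
def SymmetricSets (S T : Finset (Equiv.Perm (Fin 4))) : Prop :=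
  ∃ op ∈ symOps, T = S.image op

end

/-!
The excess of a permuton is the sum of the densities of the patterns in `S` minus `|S|/k!`. Suppose
that it vanishes only at the uniform permuton. It is continuous along segments of permutons, so the
uniform permuton lies on the segment between any two permutons whose excesses have opposite signs;
since nonuniform permutons do not all deviate from the uniform one along a single line, the excess
has the same strict sign at all of them. In particular the uniform permuton is a local extremum
along every perturbation of it by a step function, so the first-order variation vanishes; for
`k = 4` this means that `|S|/4` of the `π ∈ S` satisfy `π i = j`, whatever `i` and `j`. The excess
at the step permuton of a permutation matrix is a count, and for all other sets with this property
than the exceptional ones two of 23 suitable permutations give excesses that are not of the same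
strict sign.
-/

open Equiv (Perm)
open scoped ENNReal NNReal Nat

section PiMeasure

variable {ι κ α : Type*} [Fintype ι] [Fintype κ] [MeasurableSpace α]

lemma pi_sum_ofReal_smul [DecidableEq ι] (c : κ → ℝ) (m : κ → Measure α)
    [∀ j, IsFiniteMeasure (m j)] :
    (Measure.pi fun _ : ι => ∑ j, ENNReal.ofReal (c j) • m j) =
      ∑ f : ι → κ, (∏ i, ENNReal.ofReal (c (f i))) • Measure.pi fun i => m (f i) := by
  have (j : κ) : IsFiniteMeasure (ENNReal.ofReal (c j) • m j) :=
    (m j).smul_finite ENNReal.ofReal_ne_top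
  refine Measure.pi_eq fun s _ => ?_
  simp only [Measure.finsetSum_apply, Measure.smul_apply, smul_eq_mul, Measure.pi_pi,
    ← Finset.prod_mul_distrib]
  rw [Finset.prod_univ_sum, Fintype.piFinset_univ]

lemma pi_real_sum_ofReal_smul [DecidableEq ι] {c : κ → ℝ} (hc : ∀ j, 0 ≤ c j)
    (m : κ → Measure α) [∀ j, IsFiniteMeasure (m j)] (s : Set (ι → α)) :
    (Measure.pi fun _ : ι => ∑ j, ENNReal.ofReal (c j) • m j).real s =
      ∑ f : ι → κ, (∏ i, c (f i)) * (Measure.pi fun i => m (f i)).real s := by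
  have hprod (f : ι → κ) : ∏ i, ENNReal.ofReal (c (f i)) ≠ ∞ :=
    ENNReal.prod_ne_top fun _ _ => ENNReal.ofReal_ne_top
  have (f : ι → κ) :
      IsFiniteMeasure ((∏ i, ENNReal.ofReal (c (f i))) • Measure.pi fun i => m (f i)) :=
    Measure.smul_finite _ (hprod f)
  rw [pi_sum_ofReal_smul, Measure.real, Measure.finsetSum_apply,
    ENNReal.toReal_sum fun _ _ => measure_ne_top _ _]
  refine Finset.sum_congr rfl fun f _ => ?_
  simp [Measure.real, ENNReal.toReal_prod, hc]

lemma measurePreserving_comp_perm (μ : ι → Measure α) [∀ i, SigmaFinite (μ i)] (σ : Perm ι) :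
    MeasurePreserving (fun p : ι → α => p ∘ σ) (Measure.pi μ) (Measure.pi (μ ∘ σ)) :=
  have (i : ι) : SigmaFinite ((μ ∘ σ) i) := inferInstanceAs (SigmaFinite (μ (σ i)))
  measurePreserving_arrowCongr' μ (μ ∘ σ) σ.symm (.refl α) fun i => by
    simpa using! MeasurePreserving.id (μ i)

end PiMeasure

lemma measurableSet_strictMono {ι α : Type*} [Countable ι] [Preorder ι] [MeasurableSpace α]
    {f : ι → α → ℝ} (hf : ∀ i, Measurable (f i)) :
    MeasurableSet {a | StrictMono fun i => f i a} := by
  simp only [StrictMono, Set.ofPred_forall]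
  exact .iInter fun i => .iInter fun j => .iInter fun _ => measurableSet_lt (hf i) (hf j)

lemma eq_of_strictMono_comp_perm {k : ℕ} {f : Fin k → ℝ} {σ τ : Perm (Fin k)}
    (hσ : StrictMono (f ∘ σ)) (hτ : StrictMono (f ∘ τ)) : σ = τ := by
  have hf : Function.Injective f := by
    simpa using hσ.injective.comp σ.symm.injective
  have hcomp : f ∘ σ = f ∘ τ := Tuple.unique_monotone hσ.monotone hτ.monotone
  exact Equiv.ext fun i => hf (congrFun hcomp i)

section Density

variable {k : ℕ}

/-- The event that `k` points come in increasing order of their `x`-coordinates and form the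
pattern `π`. -/
def orderedPattern (π : Perm (Fin k)) : Set (Fin k → ℝ × ℝ) :=
  {p | StrictMono (fun i => (p i).1) ∧ StrictMono (fun i => (p (π.symm i)).2)}

lemma measurableSet_orderedPattern (π : Perm (Fin k)) : MeasurableSet (orderedPattern π) :=
  (measurableSet_strictMono fun i => (measurable_pi_apply i).fst).inter
    (measurableSet_strictMono fun i => (measurable_pi_apply (π.symm i)).snd)

lemma permutonDensity_eq_factorial_mul (π : Perm (Fin k)) (μ : Measure (ℝ × ℝ))
    [IsFiniteMeasure μ] :
    PermutonDensity π μ = k ! * (Measure.pi fun _ : Fin k => μ).real (orderedPattern π) := by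
  have hset : {p : Fin k → ℝ × ℝ | ∃ σ : Perm (Fin k), StrictMono (fun i => (p (σ i)).1) ∧
        ∀ i j : Fin k, (p (σ i)).2 < (p (σ j)).2 ↔ π i < π j} =
      ⋃ σ : Perm (Fin k), (fun p : Fin k → ℝ × ℝ => p ∘ σ) ⁻¹' orderedPattern π := by
    ext p
    simp only [Set.mem_ofPred_eq, Set.mem_iUnion, Set.mem_preimage, orderedPattern]
    refine exists_congr fun σ => and_congr_right fun _ => ⟨fun h i j hij => ?_, fun h i j => ?_⟩
    · simpa [h] using hij
    · simpa using h.lt_iff_lt (a := π i) (b := π j)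
  have hdisj : Pairwise (Function.onFun Disjoint fun σ : Perm (Fin k) =>
      (fun p : Fin k → ℝ × ℝ => p ∘ σ) ⁻¹' orderedPattern π) := fun σ τ hne =>
    Set.disjoint_left.2 fun p hσ hτ =>
      hne (eq_of_strictMono_comp_perm (f := fun i => (p i).1) hσ.1 hτ.1)
  have hσ (σ : Perm (Fin k)) : MeasurePreserving (fun p : Fin k → ℝ × ℝ => p ∘ σ)
      (Measure.pi fun _ => μ) (Measure.pi fun _ => μ) := measurePreserving_comp_perm (fun _ => μ) σ
  rw [PermutonDensity, hset, measure_iUnion hdisj fun σ =>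
    (hσ σ).measurable (measurableSet_orderedPattern π), tsum_fintype]
  simp [(hσ _).measure_preimage (measurableSet_orderedPattern π).nullMeasurableSet,
    Fintype.card_perm, Measure.real]

end Density

section OrderedVolume

variable {k n : ℕ}

/-- The `i`-th of the `n` intervals of length `1/n` partitioning `[0,1)`. -/
def cell (n : ℕ) (i : Fin n) : Set ℝ :=
  Set.Ico ((i : ℝ) / n) (((i : ℝ) + 1) / n)

lemma measurableSet_cell (i : Fin n) : MeasurableSet (cell n i) := measurableSet_Ico

lemma volume_cell (i : Fin n) : volume (cell n i) = ENNReal.ofReal (1 / n) := by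
  rw [cell, Real.volume_Ico]
  ring_nf

instance (i : Fin n) : IsFiniteMeasure (volume.restrict (cell n i)) :=
  isFiniteMeasure_restrict.2 (by simp [volume_cell])

lemma pairwise_disjoint_cell (n : ℕ) : Pairwise (Function.onFun Disjoint (cell n)) := by
  have hmono : Monotone fun i : ℕ => (i : ℝ) / n := fun i j hij => by
    dsimp only; gcongr
  intro i j hij
  simpa [Function.onFun, cell] using
    hmono.pairwise_disjoint_on_Ico_succ (Fin.val_injective.ne hij)

lemma iUnion_cell (hn : n ≠ 0) : ⋃ i, cell n i = Set.Ico 0 1 := by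
  have hpos : (0 : ℝ) < n := by positivity
  ext x
  simp only [Set.mem_iUnion, cell, Set.mem_Ico, div_le_iff₀ hpos, lt_div_iff₀ hpos]
  constructor
  · rintro ⟨i, hi, hi'⟩
    have hin : (i : ℝ) + 1 ≤ n := by exact_mod_cast i.2
    exact ⟨nonneg_of_mul_nonneg_left ((Nat.cast_nonneg _).trans hi) hpos, by nlinarith⟩
  · rintro ⟨hx, hx'⟩
    have hlt : ⌊x * n⌋₊ < n := (Nat.floor_lt (by positivity)).2 (by nlinarith)
    exact ⟨⟨_, hlt⟩, Nat.floor_le (by positivity), Nat.lt_floor_add_one _⟩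

lemma le_of_mem_cell_of_lt {i j : Fin n} {x y : ℝ} (hx : x ∈ cell n i) (hy : y ∈ cell n j)
    (hxy : x < y) : i ≤ j := by
  have hpos : (0 : ℝ) < n := by exact_mod_cast i.pos
  have hlt : (i : ℝ) < j + 1 :=
    (div_lt_div_iff_of_pos_right hpos).1 (hx.1.trans_lt (hxy.trans hy.2))
  exact Nat.lt_succ_iff.1 (by exact_mod_cast hlt)

lemma ae_injective (k : ℕ) : ∀ᵐ u : Fin k → ℝ, Function.Injective u := by
  have hne (i j : Fin k) (hij : i ≠ j) : ∀ᵐ u : Fin k → ℝ, u i ≠ u j := by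
    let D : Submodule ℝ (Fin k → ℝ) :=
      LinearMap.ker ((LinearMap.proj i : (Fin k → ℝ) →ₗ[ℝ] ℝ) - LinearMap.proj j)
    have hD : D ≠ ⊤ := fun h => by
      have : Pi.single i (1 : ℝ) ∈ D := h ▸ Submodule.mem_top
      simp [D, hij] at this
    have hset : {u : Fin k → ℝ | ¬ u i ≠ u j} = D := by
      ext u
      simp [D, sub_eq_zero]
    rw [ae_iff, hset]
    exact Measure.addHaar_submodule volume D hD
  have hall : ∀ᵐ u : Fin k → ℝ, ∀ i j, i ≠ j → u i ≠ u j :=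
    ae_all_iff.2 fun i => ae_all_iff.2 fun j => Filter.eventually_imp_distrib_left.2 (hne i j)
  exact hall.mono fun u hu i j h => not_ne_iff.1 fun hij => hu i j hij h

/-- The volume of the increasing `k`-tuples whose `i`-th coordinate lies in the cell `r i`. -/
noncomputable def orderedVolume (r : Fin k → Fin n) : ℝ :=
  (Measure.pi fun i => volume.restrict (cell n (r i))).real {u | StrictMono u}

lemma measurableSet_setOf_strictMono (k : ℕ) : MeasurableSet {u : Fin k → ℝ | StrictMono u} :=
  measurableSet_strictMono measurable_pi_apply

lemma orderedVolume_eq_zero {r : Fin k → Fin n} (hr : ¬ Monotone r) : orderedVolume r = 0 := by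
  have hempty : {u : Fin k → ℝ | StrictMono u} ∩ Set.univ.pi (fun i => cell n (r i)) = ∅ :=
    Set.eq_empty_of_forall_notMem fun u ⟨hu, hmem⟩ => hr <| monotone_iff_forall_lt.2 fun i j hij =>
      le_of_mem_cell_of_lt (hmem i trivial) (hmem j trivial) (hu hij)
  rw [orderedVolume, ← Measure.restrict_pi_pi, measureReal_restrict_apply
    (measurableSet_setOf_strictMono k), hempty, measureReal_empty]

lemma orderedVolume_comp_perm (r : Fin k → Fin n) (σ : Perm (Fin k)) :
    orderedVolume (r ∘ σ) =
      (Measure.pi fun i => volume.restrict (cell n (r i))).real {u | StrictMono (u ∘ σ)} :=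
  ((measurePreserving_comp_perm (fun i => volume.restrict (cell n (r i))) σ).measureReal_preimage
    (measurableSet_setOf_strictMono k).nullMeasurableSet).symm

lemma sum_orderedVolume_comp_perm (r : Fin k → Fin n) :
    ∑ σ : Perm (Fin k), orderedVolume (r ∘ σ) = (1 / n) ^ k := by
  let ν := Measure.pi fun i => volume.restrict (cell n (r i))
  have hcover : (⋃ σ : Perm (Fin k), {u : Fin k → ℝ | StrictMono (u ∘ σ)}) =ᵐ[ν] Set.univ := by
    have hinj : ∀ᵐ u ∂ν, Function.Injective u := by
      rw [show ν = volume.restrict _ from (Measure.restrict_pi_pi _ _).symm]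
      exact ae_restrict_of_ae (ae_injective k)
    refine eventuallyEq_univ.2 (hinj.mono fun u hu => Set.mem_iUnion.2 ⟨Tuple.sort u, ?_⟩)
    exact (Tuple.monotone_sort u).strictMono_of_injective (hu.comp (Tuple.sort u).injective)
  have hdisj : Pairwise (Function.onFun Disjoint fun σ : Perm (Fin k) =>
      {u : Fin k → ℝ | StrictMono (u ∘ σ)}) := fun σ τ hne =>
    Set.disjoint_left.2 fun u hσ hτ => hne (eq_of_strictMono_comp_perm hσ hτ)
  have hmeas (σ : Perm (Fin k)) : MeasurableSet {u : Fin k → ℝ | StrictMono (u ∘ σ)} :=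
    measurableSet_strictMono fun i => measurable_pi_apply (σ i)
  simp only [orderedVolume_comp_perm]
  rw [← measureReal_iUnion_fintype hdisj hmeas, measureReal_congr hcover]
  simp [ν, Measure.real, Measure.pi_univ, volume_cell]

/-- The number of distinct rearrangements of a weakly increasing word `r`, and `0` when `r` is
not weakly increasing. -/
def arrangements (r : Fin k → Fin n) : ℕ :=
  if Monotone r then Nat.multinomial Finset.univ fun a => Fintype.card {i // r i = a} else 0

lemma card_stabilizer_mul_multinomial (r : Fin k → Fin n) :
    Fintype.card {σ : Perm (Fin k) // r ∘ σ = r} *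
      Nat.multinomial Finset.univ (fun a => Fintype.card {i // r i = a}) = k ! := by
  rw [DomMulAct.stabilizer_card, Nat.multinomial_spec]
  congr 1
  rw [← Fintype.card_sigma, Fintype.card_congr (Equiv.sigmaFiberEquiv r), Fintype.card_fin]

lemma orderedVolume_eq_arrangements_div (r : Fin k → Fin n) :
    orderedVolume r = arrangements r / (k ! * n ^ k) := by
  by_cases hr : Monotone r
  · have hterm (σ : Perm (Fin k)) :
        orderedVolume (r ∘ σ) = if r ∘ σ = r then orderedVolume r else 0 := by
      split_ifs with h
      · rw [h]
      · exact orderedVolume_eq_zero fun hσ =>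
          h (Tuple.unique_monotone (τ := Equiv.refl _) hσ (by simpa using hr))
    have hsum := sum_orderedVolume_comp_perm r
    simp only [hterm, Finset.sum_ite, Finset.sum_const_zero, add_zero, Finset.sum_const,
      nsmul_eq_mul, ← Fintype.card_subtype] at hsum
    have hcard := card_stabilizer_mul_multinomial r
    have hfac : (k ! : ℝ) ≠ 0 := by positivity
    rw [← hcard, Nat.cast_mul] at hfac
    rw [arrangements, if_pos hr, ← div_div, div_eq_mul_inv _ ((n : ℝ) ^ k), ← one_div,
      ← one_div_pow, ← hsum, ← hcard, Nat.cast_mul]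
    field_simp [left_ne_zero_of_mul hfac, right_ne_zero_of_mul hfac]
  · simp [orderedVolume_eq_zero hr, arrangements, hr]

end OrderedVolume

section StepPermuton

variable {k n : ℕ} {A : Matrix (Fin n) (Fin n) ℝ}

lemma stepPermuton_eq_sum_prod (A : Matrix (Fin n) (Fin n) ℝ) :
    stepPermuton A = ∑ q : Fin n × Fin n, ENNReal.ofReal (A q.1 q.2 * n) •
      (volume.restrict (cell n q.1)).prod (volume.restrict (cell n q.2)) := by
  simp only [Fintype.sum_prod_type, Measure.prod_restrict]
  rfl

lemma stepPermuton_prod (A : Matrix (Fin n) (Fin n) ℝ) (s t : Set ℝ) :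
    stepPermuton A (s ×ˢ t) = ∑ i, ∑ j, ENNReal.ofReal (A i j * n) *
      (volume (s ∩ cell n i) * volume (t ∩ cell n j)) := by
  simp [stepPermuton_eq_sum_prod, Fintype.sum_prod_type, Measure.prod_prod,
    Measure.restrict_apply' (measurableSet_cell _)]

lemma stepPermuton_transpose_prod (A : Matrix (Fin n) (Fin n) ℝ) (s t : Set ℝ) :
    stepPermuton A.transpose (t ×ˢ s) = stepPermuton A (s ×ˢ t) := by
  rw [stepPermuton_prod, stepPermuton_prod, Finset.sum_comm]
  simp only [Matrix.transpose_apply, mul_comm (volume (t ∩ _))]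

lemma sum_volume_inter_cell (hn : n ≠ 0) (s : Set ℝ) :
    ∑ i, volume (s ∩ cell n i) = volume (s ∩ Set.Ico 0 1) := by
  rw [← iUnion_cell hn, ← Measure.restrict_apply' (.iUnion measurableSet_cell),
    Measure.restrict_iUnion (pairwise_disjoint_cell n) measurableSet_cell, Measure.sum_fintype,
    Measure.finsetSum_apply]
  simp only [Measure.restrict_apply' (measurableSet_cell _)]

instance (A : Matrix (Fin n) (Fin n) ℝ) : IsFiniteMeasure (stepPermuton A) := by
  rw [stepPermuton_eq_sum_prod]
  have (q : Fin n × Fin n) : IsFiniteMeasure (ENNReal.ofReal (A q.1 q.2 * n) •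
      (volume.restrict (cell n q.1)).prod (volume.restrict (cell n q.2))) :=
    Measure.smul_finite _ ENNReal.ofReal_ne_top
  infer_instance

lemma IsDoublyStochastic.transpose (hA : IsDoublyStochastic A) :
    IsDoublyStochastic A.transpose :=
  ⟨fun i j => hA.1 j i, hA.2.2, hA.2.1⟩

lemma IsDoublyStochastic.stepPermuton_prod_eq (hA : IsDoublyStochastic A) (hn : n ≠ 0)
    (s : Set ℝ) {t : Set ℝ} (ht : Set.Ico 0 1 ⊆ t) :
    stepPermuton A (s ×ˢ t) = volume (s ∩ Set.Ico 0 1) := by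
  have hcell (j : Fin n) : volume (t ∩ cell n j) = ENNReal.ofReal (1 / n) := by
    rw [← volume_cell j, Set.inter_eq_right.2]
    exact (Set.subset_iUnion _ j).trans ((iUnion_cell hn).trans_subset ht)
  have hrow (i : Fin n) :
      ∑ j, ENNReal.ofReal (A i j * n) * ENNReal.ofReal (1 / n) = 1 := by
    have hterm (j : Fin n) :
        ENNReal.ofReal (A i j * n) * ENNReal.ofReal (1 / n) = ENNReal.ofReal (A i j) := by
      rw [← ENNReal.ofReal_mul' (by positivity)]
      field_simp
    simp only [hterm]
    rw [← ENNReal.ofReal_sum_of_nonneg fun j _ => hA.1 i j, hA.2.1, ENNReal.ofReal_one]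
  simp only [stepPermuton_prod, hcell, mul_left_comm _ (volume _), ← Finset.mul_sum, hrow, mul_one,
    sum_volume_inter_cell hn]

lemma IsDoublyStochastic.isPermuton_stepPermuton (hA : IsDoublyStochastic A) (hn : n ≠ 0) :
    IsPermuton (stepPermuton A) := by
  have hvol (x x' : ℝ) (h0 : 0 ≤ x) (h1 : x' ≤ 1) :
      volume (Set.Icc x x' ∩ Set.Ico 0 1) = ENNReal.ofReal (x' - x) := by
    rw [← Real.volume_Icc]
    refine measure_congr (((ae_eq_refl _).inter Ico_ae_eq_Icc).trans ?_)
    exact (Set.inter_eq_left.2 (Set.Icc_subset_Icc h0 h1)).eventuallyEq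
  have hunit : Set.Ico (0 : ℝ) 1 ⊆ Set.Icc 0 1 := Set.Ico_subset_Icc_self
  refine ⟨⟨?_⟩, fun x x' h0 _ h1 => ?_, fun y y' h0 _ h1 => ?_⟩
  · rw [← Set.univ_prod_univ, hA.stepPermuton_prod_eq hn _ (Set.subset_univ _)]
    simp
  · rw [hA.stepPermuton_prod_eq hn _ hunit, hvol x x' h0 h1]
  · rw [← stepPermuton_transpose_prod, hA.transpose.stepPermuton_prod_eq hn _ hunit,
      hvol y y' h0 h1]

lemma stepPermuton_cell_prod_cell (A : Matrix (Fin n) (Fin n) ℝ) (i j : Fin n) :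
    stepPermuton A (cell n i ×ˢ cell n j) = ENNReal.ofReal (A i j / n) := by
  have hinter (i i' : Fin n) :
      volume (cell n i ∩ cell n i') = if i' = i then ENNReal.ofReal (1 / n) else 0 := by
    split_ifs with h
    · rw [h, Set.inter_self, volume_cell]
    · rw [(pairwise_disjoint_cell n (Ne.symm h)).inter_eq, measure_empty]
  have hn : (n : ℝ) ≠ 0 := by exact_mod_cast i.pos.ne'
  simp only [stepPermuton_prod, hinter, mul_ite, ite_mul, mul_zero, zero_mul, Finset.sum_ite_eq',
    Finset.mem_univ, if_true]
  rw [← ENNReal.ofReal_mul (by positivity), ← ENNReal.ofReal_mul' (by positivity)]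
  field_simp

lemma uniformPermuton_cell_prod_cell (i j : Fin n) :
    uniformPermuton (cell n i ×ˢ cell n j) = ENNReal.ofReal (1 / n ^ 2) := by
  have hsub (i : Fin n) : cell n i ⊆ Set.Icc 0 1 :=
    (Set.subset_iUnion _ i).trans
      ((iUnion_cell i.pos.ne').trans_subset Set.Ico_subset_Icc_self)
  rw [uniformPermuton, Measure.volume_eq_prod, ← Measure.prod_restrict, Measure.prod_prod,
    Measure.restrict_apply (measurableSet_cell i), Measure.restrict_apply (measurableSet_cell j),
    Set.inter_eq_left.2 (hsub i), Set.inter_eq_left.2 (hsub j), volume_cell, volume_cell,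
    ← ENNReal.ofReal_mul (by positivity)]
  ring_nf

lemma pi_cell_prod_cell_orderedPattern (π : Perm (Fin k)) (r c : Fin k → Fin n) :
    (Measure.pi fun i => (volume.restrict (cell n (r i))).prod
      (volume.restrict (cell n (c (π i))))).real (orderedPattern π) =
      orderedVolume r * orderedVolume c := by
  have hpre : orderedPattern π = MeasurableEquiv.arrowProdEquivProdArrow ℝ ℝ (Fin k) ⁻¹'
      ({u | StrictMono u} ×ˢ {u | StrictMono (u ∘ π.symm)}) := rfl
  have hmeas : MeasurableSet {u : Fin k → ℝ | StrictMono (u ∘ π.symm)} :=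
    measurableSet_strictMono fun i => measurable_pi_apply (π.symm i)
  rw [hpre, (measurePreserving_arrowProdEquivProdArrow ℝ ℝ (Fin k) _ _).measureReal_preimage
      ((measurableSet_setOf_strictMono k).prod hmeas).nullMeasurableSet, measureReal_prod_prod,
    ← orderedVolume_comp_perm (fun i => c (π i)) π.symm, orderedVolume]
  congr 2
  ext i
  simp

theorem permutonDensity_stepPermuton (hA : ∀ i j, 0 ≤ A i j) (π : Perm (Fin k)) :
    PermutonDensity π (stepPermuton A) = k ! * n ^ k *
      ∑ r : Fin k → Fin n, ∑ c : Fin k → Fin n,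
        (∏ i, A (r i) (c (π i))) * (orderedVolume r * orderedVolume c) := by
  rw [permutonDensity_eq_factorial_mul, stepPermuton_eq_sum_prod,
    pi_real_sum_ofReal_smul (c := fun q : Fin n × Fin n => A q.1 q.2 * n)
      (fun q => mul_nonneg (hA _ _) n.cast_nonneg), mul_assoc]
  congr 1
  rw [← (Equiv.arrowProdEquivProdArrow (Fin k) (fun _ => Fin n) fun _ => Fin n).symm.sum_comp,
    Fintype.sum_prod_type, Finset.mul_sum]
  refine Finset.sum_congr rfl fun r _ => ?_
  rw [Finset.mul_sum]
  refine Fintype.sum_equiv (Equiv.arrowCongr π (Equiv.refl (Fin n))) _ _ fun c => ?_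
  rw [← pi_cell_prod_cell_orderedPattern π]
  simp only [Equiv.arrowProdEquivProdArrow, Equiv.symm_mk, Equiv.coe_fn_mk, Finset.prod_mul_distrib,
    Finset.prod_const, Finset.card_univ, Fintype.card_fin, Equiv.arrowCongr_apply, Equiv.coe_refl,
    Function.comp_apply, Equiv.symm_apply_apply, id_eq]
  ring

end StepPermuton

section Forcing

variable {k n : ℕ} {S : Finset (Perm (Fin k))} {μ ν : Measure (ℝ × ℝ)} {t : ℝ}

/-- The amount by which the sum of the densities of the patterns of `S` in `μ` exceeds `|S|/k!`,
its value in the uniform permuton. -/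
noncomputable def excess (S : Finset (Perm (Fin k))) (μ : Measure (ℝ × ℝ)) : ℝ :=
  ∑ π ∈ S, PermutonDensity π μ - S.card / k !

/-- The uniform permuton is the only permuton in which the densities of the patterns of `S` sum
to `|S|/k!`. -/
def PermutonForcing (S : Finset (Perm (Fin k))) : Prop :=
  ∀ μ, IsPermuton μ → excess S μ = 0 → μ = uniformPermuton

/-- The convex combination of `μ` and `ν` that gives weight `t ∈ [0,1]` to `ν`. -/
noncomputable def mixture (t : ℝ) (μ ν : Measure (ℝ × ℝ)) : Measure (ℝ × ℝ) :=
  ENNReal.ofReal (1 - t) • μ + ENNReal.ofReal t • ν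

lemma isPermuton_mixture (hμ : IsPermuton μ) (hν : IsPermuton ν) (ht : t ∈ Set.Icc 0 1) :
    IsPermuton (mixture t μ ν) := by
  have hsum (a : ℝ≥0∞) : ENNReal.ofReal (1 - t) * a + ENNReal.ofReal t * a = a := by
    rw [← add_mul, ← ENNReal.ofReal_add (sub_nonneg.2 ht.2) ht.1, sub_add_cancel,
      ENNReal.ofReal_one, one_mul]
  have := hμ.1
  have := hν.1
  refine ⟨⟨?_⟩, fun x x' h0 h h1 => ?_, fun y y' h0 h h1 => ?_⟩
  · simpa [mixture] using hsum 1
  · simp [-Set.Icc_prod_Icc, mixture, hμ.2.1 x x' h0 h h1, hν.2.1 x x' h0 h h1, hsum]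
  · simp [-Set.Icc_prod_Icc, mixture, hμ.2.2 y y' h0 h h1, hν.2.2 y y' h0 h h1, hsum]

instance [IsFiniteMeasure μ] [IsFiniteMeasure ν] : IsFiniteMeasure (mixture t μ ν) :=
  have := μ.smul_finite (c := ENNReal.ofReal (1 - t)) ENNReal.ofReal_ne_top
  have := ν.smul_finite (c := ENNReal.ofReal t) ENNReal.ofReal_ne_top
  inferInstanceAs (IsFiniteMeasure (_ + _))

lemma mixture_real [IsFiniteMeasure μ] [IsFiniteMeasure ν] (ht : t ∈ Set.Icc 0 1)
    (s : Set (ℝ × ℝ)) : (mixture t μ ν).real s = (1 - t) * μ.real s + t * ν.real s := by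
  have h1 : 0 ≤ 1 - t := sub_nonneg.2 ht.2
  rw [mixture, Measure.real, Measure.add_apply, ENNReal.toReal_add
    (by simp [ENNReal.mul_eq_top]) (by simp [ENNReal.mul_eq_top])]
  simp [Measure.real, h1, ht.1]

lemma continuousOn_permutonDensity_mixture (π : Perm (Fin k)) [IsFiniteMeasure μ]
    [IsFiniteMeasure ν] :
    ContinuousOn (fun t => PermutonDensity π (mixture t μ ν)) (Set.Icc 0 1) := by
  have (j : Fin 2) : IsFiniteMeasure (![μ, ν] j) := by
    fin_cases j <;> assumption
  have hdensity : Set.EqOn (fun t => PermutonDensity π (mixture t μ ν))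
      (fun t => k ! * ∑ f : Fin k → Fin 2, (∏ i, ![1 - t, t] (f i)) *
        (Measure.pi fun i => ![μ, ν] (f i)).real (orderedPattern π)) (Set.Icc 0 1) := by
    intro t ht
    have hmix : mixture t μ ν = ∑ j, ENNReal.ofReal (![1 - t, t] j) • ![μ, ν] j := by
      simp [mixture]
    have hweight (j : Fin 2) : 0 ≤ ![1 - t, t] j := by
      fin_cases j
      exacts [sub_nonneg.2 ht.2, ht.1]
    dsimp only
    rw [← pi_real_sum_ofReal_smul hweight, ← hmix, permutonDensity_eq_factorial_mul]
  have hweight (j : Fin 2) : Continuous fun t : ℝ => ![1 - t, t] j := by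
    fin_cases j
    exacts [continuous_const.sub continuous_id, continuous_id]
  refine ContinuousOn.congr (Continuous.continuousOn ?_) hdensity
  exact continuous_const.mul <| continuous_finsetSum _ fun f _ =>
    (continuous_finsetProd _ fun i _ => hweight (f i)).mul continuous_const

lemma PermutonForcing.real_eq_uniform_iff (hS : PermutonForcing S) (hμ : IsPermuton μ)
    (hν : IsPermuton ν) (hneg : excess S μ < 0) (hpos : 0 < excess S ν) (s : Set (ℝ × ℝ)) :
    μ.real s = uniformPermuton.real s ↔ ν.real s = uniformPermuton.real s := by
  have := hμ.1
  have := hν.1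
  have hcont : ContinuousOn (fun t => excess S (mixture t μ ν)) (Set.Icc 0 1) :=
    (continuousOn_finsetSum _ fun π _ => continuousOn_permutonDensity_mixture π).sub
      continuousOn_const
  obtain ⟨t, ht, hzero⟩ : 0 ∈ (fun t => excess S (mixture t μ ν)) '' Set.Ioo 0 1 := by
    refine intermediate_value_Ioo zero_le_one hcont ⟨?_, ?_⟩ <;> simpa [mixture]
  have ht' := Set.Ioo_subset_Icc_self ht
  have huniform : uniformPermuton.real s = (1 - t) * μ.real s + t * ν.real s := by
    rw [← hS _ (isPermuton_mixture hμ hν ht') hzero, mixture_real ht']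
  have ht0 := ht.1
  have ht1 := sub_pos.2 ht.2
  constructor <;> intro h
  · exact mul_left_cancel₀ ht0.ne' (by linear_combination -huniform - (1 - t) * h)
  · exact mul_left_cancel₀ ht1.ne' (by linear_combination -huniform - t * h)

/-- The matrix with all entries `1/n`, perturbed in the direction of the rank-one matrix
`g hᵀ`. -/
noncomputable def perturbedMatrix (g h : Fin n → ℝ) (t : ℝ) : Matrix (Fin n) (Fin n) ℝ :=
  fun i j => 1 / n + t * (g i * h j)

lemma isDoublyStochastic_perturbedMatrix {g h : Fin n → ℝ} (hn : n ≠ 0) (hg : ∑ i, g i = 0)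
    (hh : ∑ j, h j = 0) (hnonneg : ∀ i j, 0 ≤ perturbedMatrix g h t i j) :
    IsDoublyStochastic (perturbedMatrix g h t) := by
  refine ⟨hnonneg, fun i => ?_, fun j => ?_⟩
  · simp [perturbedMatrix, Finset.sum_add_distrib, ← Finset.mul_sum, hh, hn]
  · simp [perturbedMatrix, Finset.sum_add_distrib, ← Finset.mul_sum, ← Finset.sum_mul, hg, hn]

lemma stepPermuton_perturbedMatrix_real_eq_uniform_iff {g h : Fin n → ℝ} {i j : Fin n}
    (hnonneg : 0 ≤ perturbedMatrix g h t i j) :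
    (stepPermuton (perturbedMatrix g h t)).real (cell n i ×ˢ cell n j) =
      uniformPermuton.real (cell n i ×ˢ cell n j) ↔ t * (g i * h j) = 0 := by
  have hn : (n : ℝ) ≠ 0 := by exact_mod_cast i.pos.ne'
  rw [Measure.real, Measure.real, stepPermuton_cell_prod_cell, uniformPermuton_cell_prod_cell,
    ENNReal.toReal_ofReal (by positivity), ENNReal.toReal_ofReal (by positivity), perturbedMatrix]
  field_simp
  simp [hn]

lemma stepPermuton_perturbedMatrix_ne_uniform {g h : Fin n → ℝ} {i j : Fin n} (ht : t ≠ 0)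
    (hg : g i ≠ 0) (hh : h j ≠ 0) (hnonneg : 0 ≤ perturbedMatrix g h t i j) :
    stepPermuton (perturbedMatrix g h t) ≠ uniformPermuton := fun heq =>
  mul_ne_zero ht (mul_ne_zero hg hh) <|
    (stepPermuton_perturbedMatrix_real_eq_uniform_iff hnonneg).1 (by rw [heq])

lemma PermutonForcing.excess_ne_zero (hS : PermutonForcing S) (hμ : IsPermuton μ)
    (hμ' : μ ≠ uniformPermuton) : excess S μ ≠ 0 :=
  fun h => hμ' (hS μ hμ h)

lemma PermutonForcing.real_eq_uniform_iff_of_ne_uniform (hS : PermutonForcing S)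
    (hμ : IsPermuton μ) (hν : IsPermuton ν) (hneg : excess S μ < 0) (hpos : 0 < excess S ν)
    {ρ : Measure (ℝ × ℝ)} (hρ : IsPermuton ρ) (hρ' : ρ ≠ uniformPermuton) (s : Set (ℝ × ℝ)) :
    ρ.real s = uniformPermuton.real s ↔ μ.real s = uniformPermuton.real s := by
  rcases (hS.excess_ne_zero hρ hρ').lt_or_gt with h | h
  · rw [hS.real_eq_uniform_iff hρ hν h hpos, hS.real_eq_uniform_iff hμ hν hneg hpos]
  · rw [hS.real_eq_uniform_iff hμ hρ hneg h]

/- If `S` is forcing and its excess changes sign between `μ` and `ν`, then all nonuniform permutons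
deviate from the uniform one in proportional ways, so on the same sets; but perturbations supported
on different cells do not. -/
lemma PermutonForcing.not_excess_neg_of_pos (hS : PermutonForcing S) (hμ : IsPermuton μ)
    (hν : IsPermuton ν) (hneg : excess S μ < 0) : ¬ 0 < excess S ν := by
  intro hpos
  let M (g : Fin 3 → ℝ) : Matrix (Fin 3) (Fin 3) ℝ := perturbedMatrix g g (1 / 3)
  have hM₁ (i j : Fin 3) : 0 ≤ M ![1, -1, 0] i j := by
    fin_cases i <;> fin_cases j <;> norm_num [M, perturbedMatrix]
  have hM₂ (i j : Fin 3) : 0 ≤ M ![0, 1, -1] i j := by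
    fin_cases i <;> fin_cases j <;> norm_num [M, perturbedMatrix]
  have hiff {g : Fin 3 → ℝ} (hg : ∑ i, g i = 0) (hM : ∀ i j, 0 ≤ M g i j) {i : Fin 3}
      (hi : g i ≠ 0) :=
    hS.real_eq_uniform_iff_of_ne_uniform hμ hν hneg hpos
      ((isDoublyStochastic_perturbedMatrix three_ne_zero hg hg hM).isPermuton_stepPermuton
        three_ne_zero)
      (stepPermuton_perturbedMatrix_ne_uniform (by norm_num) hi hi (hM i i))
      (cell 3 0 ×ˢ cell 3 0)
  have h₁ := hiff (by simp [Fin.sum_univ_three]) hM₁ (i := 0) (by simp)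
  have h₂ := hiff (by simp [Fin.sum_univ_three]) hM₂ (i := 1) (by simp)
  rw [← h₂, stepPermuton_perturbedMatrix_real_eq_uniform_iff (hM₁ 0 0),
    stepPermuton_perturbedMatrix_real_eq_uniform_iff (hM₂ 0 0)] at h₁
  norm_num at h₁

theorem PermutonForcing.excess_mul_excess_pos (hS : PermutonForcing S) (hμ : IsPermuton μ)
    (hν : IsPermuton ν) (hμ' : μ ≠ uniformPermuton) (hν' : ν ≠ uniformPermuton) :
    0 < excess S μ * excess S ν := by
  rcases (hS.excess_ne_zero hμ hμ').lt_or_gt, (hS.excess_ne_zero hν hν').lt_or_gt with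
    ⟨hμneg | hμpos, hνneg | hνpos⟩
  · exact mul_pos_of_neg_of_neg hμneg hνneg
  · exact (hS.not_excess_neg_of_pos hμ hν hμneg hνpos).elim
  · exact (hS.not_excess_neg_of_pos hν hμ hνneg hμpos).elim
  · exact mul_pos hμpos hνpos

end Forcing

section FirstOrder

variable {k n : ℕ} {S : Finset (Perm (Fin k))} {g h : Fin n → ℝ}

/-- The integral over the increasing `k`-tuples in `[0,1)` of the step function with values `g`,
evaluated at the `i`-th coordinate. -/
noncomputable def orderedMean (g : Fin n → ℝ) (i : Fin k) : ℝ :=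
  ∑ r : Fin k → Fin n, orderedVolume r * g (r i)

lemma factorial_mul_sum_orderedVolume (hn : n ≠ 0) :
    k ! * ∑ r : Fin k → Fin n, orderedVolume r = 1 := by
  have hcomp (σ : Perm (Fin k)) :
      ∑ r : Fin k → Fin n, orderedVolume (r ∘ σ) = ∑ r : Fin k → Fin n, orderedVolume r :=
    (Equiv.arrowCongr σ.symm (Equiv.refl (Fin n))).sum_comp orderedVolume
  calc (k ! : ℝ) * ∑ r : Fin k → Fin n, orderedVolume r
      = ∑ σ : Perm (Fin k), ∑ r : Fin k → Fin n, orderedVolume (r ∘ σ) := by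
        simp [hcomp, Fintype.card_perm]
    _ = 1 := by
        rw [Finset.sum_comm]
        simp [sum_orderedVolume_comp_perm, hn]

/-- The polynomial in `t` that gives the density of `π` in the step permuton of
`perturbedMatrix g h t` as long as this matrix is nonnegative. -/
noncomputable def perturbedDensity (π : Perm (Fin k)) (g h : Fin n → ℝ) (t : ℝ) : ℝ :=
  k ! * n ^ k * ∑ r : Fin k → Fin n, ∑ c : Fin k → Fin n,
    (∏ i, perturbedMatrix g h t (r i) (c (π i))) * (orderedVolume r * orderedVolume c)

lemma perturbedDensity_zero (π : Perm (Fin k)) (g h : Fin n → ℝ) (hn : n ≠ 0) :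
    perturbedDensity π g h 0 = 1 / k ! := by
  have hsum := factorial_mul_sum_orderedVolume (k := k) hn
  simp only [perturbedDensity, perturbedMatrix, zero_mul, add_zero, Finset.prod_const,
    Finset.card_univ, Fintype.card_fin, ← Finset.mul_sum, ← Finset.sum_mul]
  rw [one_div_pow, eq_div_iff (by positivity)]
  field_simp
  linear_combination (k ! * (∑ r : Fin k → Fin n, orderedVolume r) + 1) * hsum

lemma hasDerivAt_perturbedDensity_zero (π : Perm (Fin k)) (g h : Fin n → ℝ) (hn : n ≠ 0) :
    HasDerivAt (perturbedDensity π g h)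
      (k ! * n * ∑ i, orderedMean g i * orderedMean h (π i)) 0 := by
  have hentry (a b : Fin n) : HasDerivAt (fun t => perturbedMatrix g h t a b) (g a * h b) 0 := by
    simpa [perturbedMatrix] using ((hasDerivAt_id 0).mul_const (g a * h b)).const_add (1 / (n : ℝ))
  have hprod (r c : Fin k → Fin n) :
      HasDerivAt (fun t => ∏ i, perturbedMatrix g h t (r i) (c (π i)))
        (∑ i, (1 / n) ^ (k - 1) * (g (r i) * h (c (π i)))) 0 := by
    simpa [perturbedMatrix, Finset.card_erase_of_mem] using
      HasDerivAt.fun_finsetProd fun i (_ : i ∈ Finset.univ) => hentry (r i) (c (π i))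
  refine ((HasDerivAt.fun_sum fun r _ => HasDerivAt.fun_sum fun c _ =>
    (hprod r c).mul_const (orderedVolume r * orderedVolume c)).const_mul _).congr_deriv ?_
  have hpow (i : Fin k) : (n : ℝ) ^ k * (1 / n) ^ (k - 1) = n := by
    obtain ⟨k, rfl⟩ := Nat.exists_eq_add_one.2 i.pos
    rw [Nat.add_sub_cancel, pow_succ, one_div_pow]
    field_simp
  calc (k ! : ℝ) * n ^ k * ∑ r : Fin k → Fin n, ∑ c : Fin k → Fin n,
        (∑ i, (1 / (n : ℝ)) ^ (k - 1) * (g (r i) * h (c (π i)))) *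
          (orderedVolume r * orderedVolume c)
      = k ! * ∑ i, n ^ k * (1 / n) ^ (k - 1) * (orderedMean g i * orderedMean h (π i)) := by
        simp only [orderedMean, Finset.sum_mul_sum]
        simp only [Finset.mul_sum, Finset.sum_mul]
        rw [Finset.sum_comm_cycle]
        refine Finset.sum_congr rfl fun i _ => Finset.sum_congr rfl fun r _ =>
          Finset.sum_congr rfl fun c _ => by ring
    _ = k ! * n * ∑ i, orderedMean g i * orderedMean h (π i) := by
        rw [mul_assoc, Finset.mul_sum _ _ (n : ℝ)]
        exact congrArg _ (Finset.sum_congr rfl fun i _ => by rw [hpow i])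

lemma excess_stepPermuton_perturbedMatrix {t : ℝ}
    (hnonneg : ∀ a b, 0 ≤ perturbedMatrix g h t a b) :
    excess S (stepPermuton (perturbedMatrix g h t)) =
      ∑ π ∈ S, perturbedDensity π g h t - S.card / k ! := by
  simp only [excess, permutonDensity_stepPermuton hnonneg, perturbedDensity]

lemma eventually_perturbedMatrix_nonneg (g h : Fin n → ℝ) :
    ∀ᶠ t in nhds 0, ∀ a b, 0 ≤ perturbedMatrix g h t a b := by
  refine eventually_all.2 fun a => eventually_all.2 fun b => ?_
  have hcont : Continuous fun t => perturbedMatrix g h t a b :=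
    continuous_const.add (continuous_id.mul continuous_const)
  have hpos : 0 < perturbedMatrix g h 0 a b := by
    have := a.pos
    simp [perturbedMatrix, this]
  exact (hcont.tendsto 0).eventually (Ici_mem_nhds hpos)

theorem PermutonForcing.sum_orderedMean_mul_orderedMean (hS : PermutonForcing S) (hn : n ≠ 0)
    (hg : ∑ a, g a = 0) (hh : ∑ a, h a = 0) :
    ∑ π ∈ S, ∑ i, orderedMean g i * orderedMean h (π i) = 0 := by
  rcases eq_or_ne g 0 with rfl | hg0
  · simp [orderedMean]
  rcases eq_or_ne h 0 with rfl | hh0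
  · simp [orderedMean]
  obtain ⟨a, ha⟩ := Function.ne_iff.1 hg0
  obtain ⟨b, hb⟩ := Function.ne_iff.1 hh0
  let P (t : ℝ) : ℝ := ∑ π ∈ S, perturbedDensity π g h t - S.card / (k ! : ℝ)
  have hzero : P 0 = 0 := by
    simp [P, perturbedDensity_zero _ _ _ hn, div_eq_mul_inv]
  have hderiv : HasDerivAt P
      (∑ π ∈ S, k ! * n * ∑ i, orderedMean g i * orderedMean h (π i)) 0 :=
    (HasDerivAt.fun_sum fun π _ => hasDerivAt_perturbedDensity_zero π g h hn).sub_const _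
  have hnonneg := eventually_perturbedMatrix_nonneg g h
  have hsign {s t : ℝ} (hs : ∀ a b, 0 ≤ perturbedMatrix g h s a b) (hs0 : s ≠ 0)
      (ht : ∀ a b, 0 ≤ perturbedMatrix g h t a b) (ht0 : t ≠ 0) : 0 < P t * P s := by
    have hperm {t : ℝ} (ht : ∀ a b, 0 ≤ perturbedMatrix g h t a b) :=
      (isDoublyStochastic_perturbedMatrix hn hg hh ht).isPermuton_stepPermuton hn
    simpa only [P, ← excess_stepPermuton_perturbedMatrix ht,
      ← excess_stepPermuton_perturbedMatrix hs] using
      hS.excess_mul_excess_pos (hperm ht) (hperm hs)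
        (stepPermuton_perturbedMatrix_ne_uniform ht0 ha hb (ht a b))
        (stepPermuton_perturbedMatrix_ne_uniform hs0 ha hb (hs a b))
  obtain ⟨s, hs, hs0⟩ : ∃ s, (∀ a b, 0 ≤ perturbedMatrix g h s a b) ∧ s ≠ 0 :=
    ((hnonneg.filter_mono nhdsWithin_le_nhds).and self_mem_nhdsWithin).exists
      (f := nhdsWithin 0 {0}ᶜ)
  have hmin : IsLocalMin (fun t => P t * P s) 0 := by
    filter_upwards [hnonneg] with t ht
    rcases eq_or_ne t 0 with rfl | ht0
    · exact le_rfl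
    · simpa [hzero] using (hsign hs hs0 ht ht0).le
  have hcrit := hmin.hasDerivAt_eq_zero (hderiv.mul_const (P s))
  have hPs : P s ≠ 0 := right_ne_zero_of_mul (hsign hs hs0 hs hs0).ne'
  simpa [← Finset.mul_sum, hPs, hn, Nat.factorial_ne_zero] using hcrit

end FirstOrder

section Cover

variable {S : Finset (Perm (Fin 4))}

lemma orderedMean_eq_sum_div {k n : ℕ} (g : Fin n → ℝ) (i : Fin k) :
    orderedMean g i =
      (∑ a, ((∑ r : Fin k → Fin n with r i = a, arrangements r : ℕ) : ℝ) * g a) /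
        (k ! * n ^ k) := by
  simp only [orderedMean, orderedVolume_eq_arrangements_div, Nat.cast_sum, Finset.sum_mul]
  rw [← Finset.sum_fiberwise Finset.univ fun r => r i, Finset.sum_div]
  refine Finset.sum_congr rfl fun a _ => ?_
  rw [Finset.sum_div]
  refine Finset.sum_congr rfl fun r hr => ?_
  rw [(Finset.mem_filter.1 hr).2, div_mul_eq_mul_div]

lemma sum_arrangements_filter_eq : ∀ i a : Fin 4,
    ∑ r : Fin 4 → Fin 4 with r i = a, arrangements r =
      ![![175, 65, 15, 1], ![67, 109, 67, 13], ![13, 67, 109, 67], ![1, 15, 65, 175]] i a := by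
  decide +kernel

lemma exists_orderedMean_eq {G : Fin 4 → ℝ} (hG : ∑ i, G i = 0) :
    ∃ g : Fin 4 → ℝ, ∑ a, g a = 0 ∧ ∀ i, orderedMean g i = G i := by
  -- Up to a scalar, the inverse of the matrix in `sum_arrangements_filter_eq`.
  let V : Matrix (Fin 4) (Fin 4) ℝ :=
    !![75, -65, 35, -9; -69, 207, -141, 39; 39, -141, 207, -69; -9, 35, -65, 75]
  refine ⟨V.mulVec ((2 / 3 : ℝ) • G), ?_, fun i => ?_⟩
  · simp only [V, Matrix.mulVec, dotProduct, Fin.sum_univ_four] at hG ⊢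
    simp only [Matrix.of_apply, Matrix.cons_val', Matrix.cons_val_zero, Matrix.cons_val_one,
      Matrix.cons_val, Matrix.cons_val_fin_one, Pi.smul_apply, smul_eq_mul]
    linear_combination 24 * hG
  · rw [orderedMean_eq_sum_div]
    simp only [sum_arrangements_filter_eq, V, Matrix.mulVec, dotProduct, Fin.sum_univ_four]
    fin_cases i <;> simp [Nat.factorial] <;> ring

theorem PermutonForcing.sum_mul_apply (hS : PermutonForcing S) {G H : Fin 4 → ℝ}
    (hG : ∑ i, G i = 0) (hH : ∑ i, H i = 0) : ∑ π ∈ S, ∑ i, G i * H (π i) = 0 := by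
  obtain ⟨g, hg, hgG⟩ := exists_orderedMean_eq hG
  obtain ⟨h, hh, hhH⟩ := exists_orderedMean_eq hH
  simpa only [hgG, hhH] using hS.sum_orderedMean_mul_orderedMean four_ne_zero hg hh

theorem PermutonForcing.four_mul_card_filter_eq (hS : PermutonForcing S) (i j : Fin 4) :
    4 * (S.filter fun π => π i = j).card = S.card := by
  have hzero (a : Fin 4) : ∑ b, ((if b = a then 4 else 0) - 1 : ℝ) = 0 := by
    simp
  have hterm (π : Perm (Fin 4)) :
      ∑ a, ((if a = i then 4 else 0) - 1 : ℝ) * ((if π a = j then 4 else 0) - 1) =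
        4 * ((if π i = j then 4 else 0) - 1) := by
    have hπ : ∑ a, ((if π a = j then 4 else 0) - 1 : ℝ) = 0 :=
      (Equiv.sum_comp π fun b => ((if b = j then 4 else 0) - 1 : ℝ)).trans (hzero j)
    simp only [sub_mul _ _ (_ - _), one_mul, Finset.sum_sub_distrib _ fun _ => _ - _, hπ]
    simp
  have hsum := hS.sum_mul_apply (hzero i) (hzero j)
  simp only [hterm, ← Finset.mul_sum, Finset.sum_sub_distrib, ← Finset.sum_filter,
    Finset.sum_const, nsmul_eq_mul] at hsum
  have hcast : 4 * ((S.filter fun π => π i = j).card : ℝ) = S.card := by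
    linear_combination hsum / 4
  exact_mod_cast hcast

end Cover

section PermMatrix

variable {k n : ℕ} {r : Fin k → Fin n}

lemma prod_factorial_card_filter {ι κ : Type*} [LinearOrder ι] [Fintype κ] [DecidableEq κ]
    (r : ι → κ) (s : Finset ι) :
    ∏ a, (s.filter fun i => r i = a).card ! =
      ∏ i ∈ s, (s.filter fun j => j ≤ i ∧ r j = r i).card := by
  induction s using Finset.induction_on_max with
  | empty => simp
  | insert x s hx ih =>
    have hxs : x ∉ s := fun h => (hx x h).false
    have hlast : ((insert x s).filter fun j => j ≤ x ∧ r j = r x).card =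
        (s.filter fun j => r j = r x).card + 1 := by
      rw [Finset.filter_insert, if_pos ⟨le_rfl, rfl⟩,
        Finset.card_insert_of_notMem fun h => hxs (Finset.mem_filter.1 h).1]
      congr 2
      exact Finset.filter_congr fun j hj => and_iff_right (hx j hj).le
    have hrest : ∀ i ∈ s, ((insert x s).filter fun j => j ≤ i ∧ r j = r i).card =
        (s.filter fun j => j ≤ i ∧ r j = r i).card := fun i hi => by
      rw [Finset.filter_insert, if_neg fun h => (hx i hi).not_ge h.1]
    have hfactorial (a : κ) : ((insert x s).filter fun i => r i = a).card ! =
        (if a = r x then (s.filter fun j => r j = r x).card + 1 else 1) *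
          (s.filter fun i => r i = a).card ! := by
      rw [Finset.filter_insert]
      split_ifs with h₁ h₂ h₂
      · rw [Finset.card_insert_of_notMem fun h => hxs (Finset.mem_filter.1 h).1, h₁,
          Nat.factorial_succ]
      · exact absurd h₁.symm h₂
      · exact absurd h₂.symm h₁
      · rw [one_mul]
    rw [Finset.prod_insert hxs, hlast, Finset.prod_congr rfl hrest, ← ih,
      Finset.prod_congr rfl fun a _ => hfactorial a, Finset.prod_mul_distrib]
    simp

lemma arrangements_eq_div (hr : Monotone r) :
    arrangements r = k ! / ∏ i, (Finset.univ.filter fun j => j ≤ i ∧ r j = r i).card := by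
  have hcard : ∑ a, Fintype.card {i // r i = a} = k := by
    rw [← Fintype.card_sigma, Fintype.card_congr (Equiv.sigmaFiberEquiv r), Fintype.card_fin]
  rw [arrangements, if_pos hr, Nat.multinomial, hcard, ← prod_factorial_card_filter]
  simp only [Fintype.card_subtype]

lemma arrangements_comp_perm {σ : Perm (Fin n)} {π : Perm (Fin k)} (hr : Monotone r)
    (hr' : Monotone (σ ∘ r ∘ π)) : arrangements (σ ∘ r ∘ π) = arrangements r := by
  have hcard (a : Fin n) : Fintype.card {i // (σ ∘ r ∘ π) i = a} =
      Fintype.card {i // r i = σ.symm a} :=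
    Fintype.card_congr (π.subtypeEquiv fun i => σ.eq_symm_apply.symm)
  simp only [arrangements, if_pos hr, if_pos hr', hcard, Nat.multinomial]
  rw [Equiv.sum_comp σ.symm fun a => Fintype.card {i // r i = a},
    Equiv.prod_comp σ.symm fun a => (Fintype.card {i // r i = a})!]

lemma permMatrix_apply (σ : Perm (Fin n)) (i j : Fin n) :
    σ.permMatrix ℝ i j = if σ i = j then 1 else 0 := by
  simp [PEquiv.toMatrix_apply, eq_comm]

lemma isDoublyStochastic_permMatrix (σ : Perm (Fin n)) :
    IsDoublyStochastic (σ.permMatrix ℝ) :=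
  mem_doublyStochastic_iff_sum.1 (permMatrix_mem_doublyStochastic (σ := σ))

lemma stepPermuton_permMatrix_ne_uniform (σ : Perm (Fin n)) (hn : 2 ≤ n) :
    stepPermuton (σ.permMatrix ℝ) ≠ uniformPermuton := fun heq => by
  let i : Fin n := ⟨0, by omega⟩
  have hcell : ENNReal.ofReal (1 / n) = ENNReal.ofReal (1 / n ^ 2) := by
    rw [← uniformPermuton_cell_prod_cell i (σ i), ← heq, stepPermuton_cell_prod_cell,
      permMatrix_apply, if_pos rfl]
  rw [ENNReal.ofReal_eq_ofReal_iff (by positivity) (by positivity)] at hcell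
  have hn' : (2 : ℝ) ≤ n := by exact_mod_cast hn
  have hlt : 1 / (n : ℝ) ^ 2 < 1 / n :=
    one_div_lt_one_div_of_lt (by linarith) (by nlinarith)
  exact hlt.ne' hcell

lemma permutonDensity_stepPermuton_permMatrix (π : Perm (Fin k)) (σ : Perm (Fin n)) (hn : n ≠ 0) :
    PermutonDensity π (stepPermuton (σ.permMatrix ℝ)) =
      (∑ r : Fin k → Fin n with Monotone r ∧ Monotone (σ ∘ r ∘ π.symm), arrangements r ^ 2 : ℕ) /
        (k ! * n ^ k) := by
  have hprod (r c : Fin k → Fin n) : ∏ i, σ.permMatrix ℝ (r i) (c (π i)) =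
      if c = σ ∘ r ∘ π.symm then 1 else 0 := by
    have hiff : (∀ i, σ (r i) = c (π i)) ↔ c = σ ∘ r ∘ π.symm := by
      rw [← Function.comp_assoc, Equiv.eq_comp_symm, funext_iff]
      exact forall_congr' fun i => eq_comm
    simp only [permMatrix_apply, Finset.prod_ite_zero, Finset.prod_const_one, Finset.mem_univ,
      true_imp_iff, hiff]
  have hterm (r : Fin k → Fin n) : arrangements r * arrangements (σ ∘ r ∘ π.symm) =
      if Monotone r ∧ Monotone (σ ∘ r ∘ π.symm) then arrangements r ^ 2 else 0 := by
    split_ifs with h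
    · rw [arrangements_comp_perm h.1 h.2, sq]
    · rcases not_and_or.1 h with h | h <;> simp [arrangements, h]
  rw [permutonDensity_stepPermuton (isDoublyStochastic_permMatrix σ).1]
  simp only [hprod, ite_mul, one_mul, zero_mul, Finset.sum_ite_eq', Finset.mem_univ, if_true,
    orderedVolume_eq_arrangements_div, div_mul_div_comm, ← Nat.cast_mul, hterm, Finset.sum_filter,
    Nat.cast_sum]
  rw [← Finset.sum_div]
  push_cast
  field_simp

end PermMatrix

section SumSuffixes

variable {α β M : Type*} [AddCommMonoid M]

/-- The sum of `f` over the nonempty suffixes of a list, each given by its head and the suffix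
itself. -/
def sumSuffixes (f : α → List α → M) : List α → M
  | [] => 0
  | a :: l => f a (a :: l) + sumSuffixes f l

lemma sumSuffixes_map (f : β → List β → M) (g : α → β) (l : List α) :
    sumSuffixes f (l.map g) = sumSuffixes (fun a l => f (g a) (l.map g)) l := by
  induction l with
  | nil => rfl
  | cons a l ih => rw [sumSuffixes, ← ih]; rfl

lemma sumSuffixes_eq_sum_map [LinearOrder α] (f : α → List α → M) {l : List α}
    (hl : l.Pairwise (· < ·)) :
    sumSuffixes f l = (l.map fun a => f a (l.filter (a ≤ ·))).sum := by
  induction l with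
  | nil => rfl
  | cons a l ih =>
    obtain ⟨ha, hl⟩ := List.pairwise_cons.1 hl
    have hhead : (a :: l).filter (a ≤ ·) = a :: l :=
      List.filter_eq_self.2 (by simpa using fun b hb => (ha b hb).le)
    have htail : ∀ b ∈ l, (a :: l).filter (b ≤ ·) = l.filter (b ≤ ·) := fun b hb =>
      List.filter_cons_of_neg (by simpa using ha b hb)
    rw [sumSuffixes, List.map_cons, List.sum_cons, hhead, ih hl]
    congr 2
    exact List.map_congr_left fun b hb => by rw [htail b hb]

lemma sumSuffixes_filter_finRange {n : ℕ} (f : Fin n → List (Fin n) → M) {p : Fin n → Prop}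
    [DecidablePred p] (hp : Monotone p) :
    sumSuffixes f ((List.finRange n).filter p) =
      ∑ a, if p a then f a ((List.finRange n).filter (a ≤ ·)) else 0 := by
  have hsorted : ((List.finRange n).filter p).Pairwise (· < ·) :=
    (List.pairwise_lt_finRange n).filter _
  have hfilter : ∀ a, p a →
      ((List.finRange n).filter p).filter (a ≤ ·) = (List.finRange n).filter (a ≤ ·) := by
    intro a ha
    rw [List.filter_filter]
    exact List.filter_congr fun b _ => by simpa using fun hab => hp hab ha
  rw [sumSuffixes_eq_sum_map f hsorted, ← List.sum_toFinset _ hsorted.nodup,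
    ← Finset.sum_filter, List.toFinset_filter, List.toFinset_finRange]
  exact Finset.sum_congr (by simp) fun a ha => by rw [hfilter a (by simpa using ha)]

end SumSuffixes

section PatternCount

variable {n : ℕ}

/-- The one-line notation of a permutation, with values counted from 0. -/
def oneLine (σ : Perm (Fin n)) : List ℕ :=
  (List.finRange n).map fun i => σ i

/-- Whether `a` and `b`, if distinct, are ordered like the values of `π` at `p` and `q`. This and
the other Boolean operations in `patternCount` are chosen for evaluation by the kernel. -/
def orderedLike (π : Perm (Fin 4)) (p q : Fin 4) (a b : ℕ) : Bool :=
  bif Nat.ble (π p) (π q) then Nat.ble a b else Nat.ble b a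

/-- The density of the pattern `π` in the step permuton of the permutation matrix with one-line
notation `w` of length `n`, in units of `1/(24n⁴)`. -/
def patternCount (π : Perm (Fin 4)) (w : List ℕ) : ℕ :=
  sumSuffixes (fun a l => sumSuffixes (fun b l => bif orderedLike π 0 1 a b then
    sumSuffixes (fun c l => bif orderedLike π 0 2 a c && orderedLike π 1 2 b c then
      sumSuffixes (fun d _ => bif orderedLike π 0 3 a d && orderedLike π 1 3 b d &&
          orderedLike π 2 3 c d then
        (4 ! / (((a.beq b).toNat + 1) * ((a.beq c).toNat + (b.beq c).toNat + 1) *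
          ((a.beq d).toNat + (b.beq d).toNat + (c.beq d).toNat + 1))) ^ 2
      else 0) l
    else 0) l
  else 0) l) w

lemma monotone_comp_symm_iff {π : Perm (Fin 4)} {f : Fin 4 → Fin n} :
    Monotone (f ∘ π.symm) ↔ ∀ p q, p < q → orderedLike π p q (f p) (f q) := by
  have horder (p q : Fin 4) : orderedLike π p q (f p) (f q) ↔
      if π p ≤ π q then f p ≤ f q else f q ≤ f p := by
    simp [orderedLike, Bool.cond_eq_ite, apply_ite (· = true)]
  simp only [horder]
  refine ⟨fun hf p q _ => ?_, fun h i j hij => ?_⟩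
  · split_ifs with hle
    · simpa using hf hle
    · simpa using hf (not_le.1 hle).le
  · rcases lt_trichotomy (π.symm i) (π.symm j) with hlt | heq | hgt
    · simpa [hij] using h _ _ hlt
    · simp [heq]
    · obtain rfl | hij := hij.eq_or_lt
      · rfl
      · simpa [hij.not_ge] using h _ _ hgt

lemma sum_fin_succ_arrow {k : ℕ} {α : Type*} [Fintype α] (f : (Fin (k + 1) → α) → ℕ) :
    ∑ r, f r = ∑ a, ∑ r, f (Matrix.vecCons a r) := by
  rw [← (Fin.consEquiv fun _ => α).sum_comp, Fintype.sum_prod_type]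
  rfl

lemma monotone_and_forall_lt_fin_four_iff {r : Fin 4 → Fin n} {R : Fin 4 → Fin 4 → Prop} :
    (Monotone r ∧ ∀ p q, p < q → R p q) ↔
      (r 0 ≤ r 1 ∧ R 0 1) ∧ (r 1 ≤ r 2 ∧ R 0 2 ∧ R 1 2) ∧
        r 2 ≤ r 3 ∧ (R 0 3 ∧ R 1 3) ∧ R 2 3 := by
  have hmono : Monotone r ↔ r 0 ≤ r 1 ∧ r 1 ≤ r 2 ∧ r 2 ≤ r 3 := by
    simp [Fin.monotone_iff_le_succ, Fin.forall_fin_succ]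
  have hpairs : (∀ p q, p < q → R p q) ↔
      (R 0 1 ∧ R 0 2 ∧ R 0 3) ∧ (R 1 2 ∧ R 1 3) ∧ R 2 3 := by
    simp [Fin.forall_fin_succ]
  rw [hmono, hpairs]
  tauto

lemma sum_arrangements_sq_eq_patternCount (π : Perm (Fin 4)) (σ : Perm (Fin n)) :
    ∑ r : Fin 4 → Fin n with Monotone r ∧ Monotone (σ ∘ r ∘ π.symm), arrangements r ^ 2 =
      patternCount π (oneLine σ) := by
  have hterm (r : Fin 4 → Fin n) :
      (if Monotone r ∧ Monotone (σ ∘ r ∘ π.symm) then arrangements r ^ 2 else 0) =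
        if Monotone r ∧ ∀ p q, p < q → orderedLike π p q (σ (r p)) (σ (r q)) then
          (4 ! / ∏ i, (Finset.univ.filter fun j => j ≤ i ∧ r j = r i).card) ^ 2 else 0 := by
    exact ite_congr (propext <| and_congr_right fun _ => monotone_comp_symm_iff (f := σ ∘ r))
      (fun h => by rw [arrangements_eq_div h.1]) fun _ => rfl
  have hfinRange (f : Fin n → List (Fin n) → ℕ) :
      sumSuffixes f (List.finRange n) = ∑ a, f a ((List.finRange n).filter (a ≤ ·)) := by
    simpa using sumSuffixes_filter_finRange f (monotone_const (c := True))
  have hfilter (a : Fin n) (f : Fin n → List (Fin n) → ℕ) :=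
    sumSuffixes_filter_finRange f (p := (a ≤ ·)) fun _ _ hbc hab => hab.trans hbc
  have hbeq (a b : Fin n) : (Nat.beq (σ a) (σ b)).toNat = if a = b then 1 else 0 := by
    simp [Bool.toNat, Bool.cond_eq_ite, Fin.val_inj]
  simp only [Finset.sum_filter, hterm]
  simp only [monotone_and_forall_lt_fin_four_iff,
    sum_fin_succ_arrow, Fintype.sum_unique, Finset.card_filter, Fin.prod_univ_four,
    Fin.sum_univ_four, patternCount, oneLine, sumSuffixes_map, hfinRange, hfilter, hbeq,
    Bool.cond_eq_ite, Bool.and_eq_true]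
  simp [ite_and, Finset.sum_ite_irrel]

theorem permutonDensity_stepPermuton_permMatrix_four (π : Perm (Fin 4)) (σ : Perm (Fin n))
    (hn : n ≠ 0) :
    PermutonDensity π (stepPermuton (σ.permMatrix ℝ)) =
      patternCount π (oneLine σ) / (24 * n ^ 4) := by
  rw [permutonDensity_stepPermuton_permMatrix π σ hn, sum_arrangements_sq_eq_patternCount]
  norm_num [Nat.factorial]

end PatternCount

section PermutationTest

lemma excess_stepPermuton_permMatrix {n : ℕ} (S : Finset (Perm (Fin 4))) (σ : Perm (Fin n))
    (hn : n ≠ 0) :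
    excess S (stepPermuton (σ.permMatrix ℝ)) =
      ((∑ π ∈ S, patternCount π (oneLine σ) : ℕ) - (S.card * n ^ 4 : ℕ)) / (24 * n ^ 4) := by
  have hn' : (n : ℝ) ≠ 0 := Nat.cast_ne_zero.2 hn
  simp only [excess, permutonDensity_stepPermuton_permMatrix_four _ σ hn, ← Finset.sum_div]
  push_cast [Nat.factorial]
  field_simp

lemma exists_oneLine_eq {w : List ℕ} (hw : w.Perm (List.range w.length)) :
    ∃ σ : Perm (Fin w.length), oneLine σ = w := by
  have hlt (i : Fin w.length) : w[i] < w.length :=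
    List.mem_range.1 <| hw.mem_iff.1 <| List.getElem_mem i.2
  have hinj : Function.Injective fun i => (⟨w[i], hlt i⟩ : Fin w.length) := fun i j hij =>
    Fin.ext <| (hw.nodup_iff.2 List.nodup_range).getElem_inj_iff.1 (Fin.mk.inj hij)
  exact ⟨.ofBijective _ (Finite.injective_iff_bijective.1 hinj), List.map_getElem_finRange w⟩

lemma exists_ne_uniformPermuton_excess_eq (S : Finset (Perm (Fin 4))) {w : List ℕ}
    (hlen : 2 ≤ w.length) (hw : w.Perm (List.range w.length)) :
    ∃ μ, IsPermuton μ ∧ μ ≠ uniformPermuton ∧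
      excess S μ = ((∑ π ∈ S, patternCount π w : ℕ) - (S.card * w.length ^ 4 : ℕ)) /
        (24 * w.length ^ 4) := by
  obtain ⟨σ, hσ⟩ := exists_oneLine_eq hw
  refine ⟨_, (isDoublyStochastic_permMatrix σ).isPermuton_stepPermuton (by lia),
    stepPermuton_permMatrix_ne_uniform σ hlen, ?_⟩
  rw [excess_stepPermuton_permMatrix S σ (by lia), hσ]

theorem PermutonForcing.card_mul_pow_lt_sum_patternCount {S : Finset (Perm (Fin 4))}
    (hS : PermutonForcing S) {v w : List ℕ} (hv_len : 2 ≤ v.length) (hw_len : 2 ≤ w.length)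
    (hv : v.Perm (List.range v.length)) (hw : w.Perm (List.range w.length))
    (hle : S.card * v.length ^ 4 ≤ ∑ π ∈ S, patternCount π v) :
    S.card * w.length ^ 4 < ∑ π ∈ S, patternCount π w := by
  obtain ⟨μ, hμ, hμ_ne, hμ_excess⟩ := exists_ne_uniformPermuton_excess_eq S hv_len hv
  obtain ⟨ν, hν, hν_ne, hν_excess⟩ := exists_ne_uniformPermuton_excess_eq S hw_len hw
  have hμ_nonneg : 0 ≤ excess S μ := by
    rw [hμ_excess]
    exact div_nonneg (sub_nonneg.2 (Nat.cast_le.2 hle)) (by positivity)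
  have hν_pos := pos_of_mul_pos_right (hS.excess_mul_excess_pos hμ hν hμ_ne hν_ne) hμ_nonneg
  have hdenom : (0 : ℝ) < 24 * w.length ^ 4 := by positivity
  rwa [hν_excess, div_pos_iff_of_pos_right hdenom, sub_pos, Nat.cast_lt] at hν_pos

end PermutationTest

section SplitSublists

variable {α M : Type*} [AddCommMonoid M] [PartialOrder M] [Sub M] [DecidableLE M]

/-- The sublists of a list whose entries have total weight at most `s` while the remaining entries
have total weight at most `t`, found by deciding one entry after the other. -/
def splitSublists (v : α → M) : List α → M → M → List (List α)
  | [], _, _ => [[]]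
  | x :: l, s, t =>
    (if v x ≤ s then (splitSublists v l (s - v x) t).map (x :: ·) else []) ++
      if v x ≤ t then splitSublists v l s (t - v x) else []

lemma filter_mem_splitSublists [IsOrderedCancelAddMonoid M] [CanonicallyOrderedAdd M]
    [OrderedSub M] (v : α → M) (p : α → Prop) [DecidablePred p] {l : List α} {s t : M}
    (hs : ((l.filter p).map v).sum ≤ s) (ht : ((l.filter (¬p ·)).map v).sum ≤ t) :
    l.filter p ∈ splitSublists v l s t := by
  induction l generalizing s t with
  | nil => simp [splitSublists]
  | cons x l ih =>
    by_cases hx : p x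
    · rw [List.filter_cons_of_pos (by simpa), List.map_cons, List.sum_cons] at hs
      rw [List.filter_cons_of_neg (by simpa)] at ht
      rw [List.filter_cons_of_pos (by simpa), splitSublists, if_pos (le_self_add.trans hs)]
      exact List.mem_append_left _ (List.mem_map_of_mem (ih (le_tsub_of_add_le_left hs) ht))
    · rw [List.filter_cons_of_neg (by simpa)] at hs
      rw [List.filter_cons_of_pos (by simpa), List.map_cons, List.sum_cons] at ht
      rw [List.filter_cons_of_neg (by simpa), splitSublists, if_pos (le_self_add.trans ht)]
      exact List.mem_append_right _ (ih hs (le_tsub_of_add_le_left ht))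

end SplitSublists

section FiniteSearch

/-- The 4-permutations in lexicographic order. -/
noncomputable def patterns : List (Perm (Fin 4)) := [
  mk4 0 1 2 3, mk4 0 1 3 2, mk4 0 2 1 3, mk4 0 2 3 1, mk4 0 3 1 2, mk4 0 3 2 1,
  mk4 1 0 2 3, mk4 1 0 3 2, mk4 1 2 0 3, mk4 1 2 3 0, mk4 1 3 0 2, mk4 1 3 2 0,
  mk4 2 0 1 3, mk4 2 0 3 1, mk4 2 1 0 3, mk4 2 1 3 0, mk4 2 3 0 1, mk4 2 3 1 0,
  mk4 3 0 1 2, mk4 3 0 2 1, mk4 3 1 0 2, mk4 3 1 2 0, mk4 3 2 0 1, mk4 3 2 1 0]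

lemma nodup_patterns : patterns.Nodup := by decide +kernel

lemma mem_patterns : ∀ π, π ∈ patterns := by decide +kernel

lemma toFinset_filter_patterns (p : Perm (Fin 4) → Prop) [DecidablePred p] :
    (patterns.filter p).toFinset = Finset.univ.filter p := by
  ext π
  simp [mem_patterns]

lemma sum_map_filter_patterns {N : Type*} [AddCommMonoid N] (p : Perm (Fin 4) → Prop)
    [DecidablePred p] (f : Perm (Fin 4) → N) :
    ((patterns.filter p).map f).sum = ∑ π with p π, f π := by
  rw [← List.sum_toFinset f (nodup_patterns.filter _), toFinset_filter_patterns]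

lemma length_filter_patterns (p : Perm (Fin 4) → Prop) [DecidablePred p] :
    (patterns.filter p).length = (Finset.univ.filter p).card := by
  rw [← List.toFinset_card_of_nodup (nodup_patterns.filter _), toFinset_filter_patterns]

/-- The entries of a 4 × 4 matrix. Unlike functions, nested tuples are evaluated entry by entry
when the kernel computes with them. -/
def entries (A : Matrix (Fin 4) (Fin 4) ℕ) :
    (ℕ × ℕ × ℕ × ℕ) × (ℕ × ℕ × ℕ × ℕ) × (ℕ × ℕ × ℕ × ℕ) × (ℕ × ℕ × ℕ × ℕ) :=
  let row i := (A i 0, A i 1, A i 2, A i 3)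
  (row 0, row 1, row 2, row 3)

lemma sum_entries {ι : Type*} (s : Finset ι) (A : ι → Matrix (Fin 4) (Fin 4) ℕ) :
    ∑ x ∈ s, entries (A x) = entries fun i j => ∑ x ∈ s, A x i j := by
  simp [entries, Prod.ext_iff, Prod.fst_sum, Prod.snd_sum]

instance {α β : Type*} [LE α] [LE β] [DecidableLE α] [DecidableLE β] : DecidableLE (α × β) :=
  fun x y => inferInstanceAs (Decidable (x.1 ≤ y.1 ∧ x.2 ≤ y.2))

theorem filter_patterns_mem_splitSublists {S : Finset (Perm (Fin 4))} {k : ℕ}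
    (hS : ∀ i j, (S.filter fun π => π i = j).card = k) :
    patterns.filter (· ∈ S) ∈ splitSublists (fun π => entries (π.permMatrix ℕ)) patterns
      (entries fun _ _ => k) (entries fun _ _ => 6 - k) := by
  have hin (i j : Fin 4) : ∑ π with π ∈ S, π.permMatrix ℕ i j = k := by
    simp [hS]
  have hout (i j : Fin 4) : ∑ π with π ∉ S, π.permMatrix ℕ i j = 6 - k := by
    have htotal : ∀ i j, ∑ π : Perm (Fin 4), π.permMatrix ℕ i j = 6 := by decide +kernel
    rw [← htotal i j, ← hin i j, ← Finset.sum_filter_add_sum_filter_not Finset.univ (· ∈ S),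
      Nat.add_sub_cancel_left]
  apply filter_mem_splitSublists
  · simp only [sum_map_filter_patterns, sum_entries, hin, le_refl]
  · simp only [sum_map_filter_patterns, sum_entries, hout, le_refl]

/-- The permutations, in one-line notation with values counted from 0, whose step permutons separate
the sums of densities from `|S|/24`. -/
def tests : List (List ℕ) := [
  [0, 1],
  [1, 5, 2, 3, 0, 4],
  [0, 4, 3, 2, 1, 5],
  [4, 0, 2, 3, 5, 1],
  [0, 2, 4, 1, 3, 5],
  [3, 2, 1, 0],
  [3, 0, 4, 5, 2, 1],
  [4, 3, 0, 1, 5, 2],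
  [1, 5, 4, 0, 2, 3],
  [2, 3, 5, 1, 0, 4],
  [0, 3, 4, 1, 2, 5],
  [2, 1, 0, 5, 4, 3],
  [0, 2, 1, 3],
  [2, 3, 5, 0, 4, 1],
  [0, 8, 6, 3, 2, 7, 1, 5, 4],
  [8, 2, 4, 5, 0, 1, 6, 3, 7],
  [4, 3, 7, 1, 6, 5, 2, 0, 8],
  [7, 3, 6, 1, 0, 5, 4, 2, 8],
  [5, 7, 9, 1, 3, 8, 6, 4, 2, 0],
  [7, 0, 6, 1, 5, 2, 9, 3, 8, 4],
  [3, 9, 2, 5, 1, 6, 0, 7, 4, 8],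
  [2, 0, 8, 6, 4, 9, 1, 3, 5, 7],
  [3, 4, 7, 12, 11, 2, 6, 10, 1, 0, 5, 8, 9]]

lemma perm_range_of_mem_tests :
    ∀ w ∈ tests, 2 ≤ w.length ∧ w.Perm (List.range w.length) := by decide +kernel

/-- The five sets of the theorem. -/
noncomputable def exceptionalSets : List (Finset (Perm (Fin 4))) := [
  {mk4 0 1 2 3, mk4 0 1 3 2, mk4 1 0 2 3, mk4 1 0 3 2, mk4 2 3 0 1, mk4 2 3 1 0, mk4 3 2 0 1,
    mk4 3 2 1 0},
  {mk4 0 1 2 3, mk4 0 3 2 1, mk4 1 0 3 2, mk4 1 2 3 0, mk4 2 1 0 3, mk4 2 3 0 1, mk4 3 0 1 2,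
    mk4 3 2 1 0},
  {mk4 0 2 1 3, mk4 0 2 3 1, mk4 1 3 0 2, mk4 1 3 2 0, mk4 2 0 1 3, mk4 2 0 3 1, mk4 3 1 0 2,
    mk4 3 1 2 0},
  {mk4 0 2 1 3, mk4 0 3 1 2, mk4 1 2 0 3, mk4 1 3 0 2, mk4 2 0 3 1, mk4 2 1 3 0, mk4 3 0 2 1,
    mk4 3 1 2 0},
  {mk4 0 1 2 3, mk4 0 1 3 2, mk4 0 3 2 1, mk4 1 0 2 3, mk4 1 0 3 2, mk4 1 2 3 0, mk4 2 1 0 3,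
    mk4 2 3 0 1, mk4 2 3 1 0, mk4 3 0 1 2, mk4 3 2 0 1, mk4 3 2 1 0}]

theorem tests_separate_or_exceptional : ∀ k ∈ List.range 7,
    ∀ T ∈ splitSublists (fun π => entries (π.permMatrix ℕ)) patterns
      (entries fun _ _ => k) (entries fun _ _ => 6 - k),
    (∃ w ∈ tests, T.length * w.length ^ 4 ≤ (T.map (patternCount · w)).sum) ∧
      (∃ w ∈ tests, (T.map (patternCount · w)).sum ≤ T.length * w.length ^ 4) ∨
    T.toFinset ∈ exceptionalSets ∨ T.toFinset ∈ exceptionalSets.map (Finset.univ \ ·) := by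
  decide +kernel

theorem PermutonForcing.exists_exceptional {S : Finset (Perm (Fin 4))} (hS : PermutonForcing S) :
    S ∈ exceptionalSets ∨ S ∈ exceptionalSets.map (Finset.univ \ ·) := by
  have hcover (i j : Fin 4) : (S.filter fun π => π i = j).card = S.card / 4 := by
    have := hS.four_mul_card_filter_eq i j
    lia
  have hk : S.card / 4 ∈ List.range 7 := by
    have : S.card ≤ 24 := S.card_le_univ
    rw [List.mem_range]
    lia
  have hsearch := tests_separate_or_exceptional _ hk _ (filter_patterns_mem_splitSublists hcover)
  simp only [length_filter_patterns, sum_map_filter_patterns, toFinset_filter_patterns,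
    Finset.filter_univ_mem] at hsearch
  refine hsearch.resolve_left ?_
  rintro ⟨⟨v, hv, hle⟩, w, hw, hge⟩
  obtain ⟨hv_len, hv_perm⟩ := perm_range_of_mem_tests v hv
  obtain ⟨hw_len, hw_perm⟩ := perm_range_of_mem_tests w hw
  exact hge.not_gt (hS.card_mul_pow_lt_sum_patternCount hv_len hw_len hv_perm hw_perm hle)

end FiniteSearch

theorem statement_18 (S : Finset (Equiv.Perm (Fin 4)))
    (h : ¬ (S = ({
        mk4 0 1 2 3,
        mk4 0 1 3 2,
        mk4 1 0 2 3,
        mk4 1 0 3 2,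
        mk4 2 3 0 1,
        mk4 2 3 1 0,
        mk4 3 2 0 1,
        mk4 3 2 1 0} : Finset (Equiv.Perm (Fin 4))) ∨
      S = ({
        mk4 0 1 2 3,
        mk4 0 3 2 1,
        mk4 1 0 3 2,
        mk4 1 2 3 0,
        mk4 2 1 0 3,
        mk4 2 3 0 1,
        mk4 3 0 1 2,
        mk4 3 2 1 0} : Finset (Equiv.Perm (Fin 4))) ∨
      S = ({
        mk4 0 2 1 3,
        mk4 0 2 3 1,
        mk4 1 3 0 2,
        mk4 1 3 2 0,
        mk4 2 0 1 3,
        mk4 2 0 3 1,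
        mk4 3 1 0 2,
        mk4 3 1 2 0} : Finset (Equiv.Perm (Fin 4))) ∨
      S = ({
        mk4 0 2 1 3,
        mk4 0 3 1 2,
        mk4 1 2 0 3,
        mk4 1 3 0 2,
        mk4 2 0 3 1,
        mk4 2 1 3 0,
        mk4 3 0 2 1,
        mk4 3 1 2 0} : Finset (Equiv.Perm (Fin 4))) ∨
      S = ({
        mk4 0 1 2 3,
        mk4 0 1 3 2,
        mk4 0 3 2 1,
        mk4 1 0 2 3,
        mk4 1 0 3 2,
        mk4 1 2 3 0,
        mk4 2 1 0 3,
        mk4 2 3 0 1,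
        mk4 2 3 1 0,
        mk4 3 0 1 2,
        mk4 3 2 0 1,
        mk4 3 2 1 0} : Finset (Equiv.Perm (Fin 4))) ∨
      S = Finset.univ \ ({
        mk4 0 1 2 3,
        mk4 0 1 3 2,
        mk4 1 0 2 3,
        mk4 1 0 3 2,
        mk4 2 3 0 1,
        mk4 2 3 1 0,
        mk4 3 2 0 1,
        mk4 3 2 1 0} : Finset (Equiv.Perm (Fin 4))) ∨
      S = Finset.univ \ ({
        mk4 0 1 2 3,
        mk4 0 3 2 1,
        mk4 1 0 3 2,
        mk4 1 2 3 0,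
        mk4 2 1 0 3,
        mk4 2 3 0 1,
        mk4 3 0 1 2,
        mk4 3 2 1 0} : Finset (Equiv.Perm (Fin 4))) ∨
      S = Finset.univ \ ({
        mk4 0 2 1 3,
        mk4 0 2 3 1,
        mk4 1 3 0 2,
        mk4 1 3 2 0,
        mk4 2 0 1 3,
        mk4 2 0 3 1,
        mk4 3 1 0 2,
        mk4 3 1 2 0} : Finset (Equiv.Perm (Fin 4))) ∨
      S = Finset.univ \ ({
        mk4 0 2 1 3,
        mk4 0 3 1 2,
        mk4 1 2 0 3,
        mk4 1 3 0 2,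
        mk4 2 0 3 1,
        mk4 2 1 3 0,
        mk4 3 0 2 1,
        mk4 3 1 2 0} : Finset (Equiv.Perm (Fin 4))) ∨
      S = Finset.univ \ ({
        mk4 0 1 2 3,
        mk4 0 1 3 2,
        mk4 0 3 2 1,
        mk4 1 0 2 3,
        mk4 1 0 3 2,
        mk4 1 2 3 0,
        mk4 2 1 0 3,
        mk4 2 3 0 1,
        mk4 2 3 1 0,
        mk4 3 0 1 2,
        mk4 3 2 0 1,
        mk4 3 2 1 0} : Finset (Equiv.Perm (Fin 4))))) :
    ∃ μ : Measure (ℝ × ℝ), IsPermuton μ ∧ μ ≠ uniformPermuton ∧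
      ∑ π ∈ S, PermutonDensity π μ = (S.card : ℝ) / 24 := by
  contrapose! h
  have hS : PermutonForcing S := fun μ hμ hexcess => by
    by_contra hne
    exact h μ hμ hne (by simpa [excess, sub_eq_zero, Nat.factorial] using hexcess)
  simpa [exceptionalSets, or_assoc] using hS.exists_exceptional
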